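/- arXiv:math/0504068 — 2 statements merged into one kernel-verified Lean document; each statement's English description precedes it below -/
import Mathlib

section
/- If R is right noetherian, left CS, and left P-injective, then R is quasi-Frobenius. -/
open MulOpposite in
/-- Right ideals of `R`, as submodules of `R` over `Rᵐᵒᵖ`. -/
abbrev RIdeal (R : Type*) [Ring R] := Submodule Rᵐᵒᵖ R

section Defs
variable (R : Type*) [Ring R]

/-- Left annihilator of a subset. -/
def lAnn (X : Set R) : Set R := {a | ∀ x ∈ X, a * x = 0}

/-- Right annihilator of a subset. -/
def rAnn (X : Set R) : Set R := {a | ∀ x ∈ X, x * a = 0}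

/-- Right annihilator of a subset, as a right ideal. -/
def rAnnI (X : Set R) : RIdeal R where
  carrier := rAnn R X
  add_mem' := by intro a b ha hb x hx; rw [mul_add, ha x hx, hb x hx, add_zero]
  zero_mem' := by intro x hx; rw [mul_zero]
  smul_mem' := by
    intro c a ha x hx
    show x * (a * c.unop) = 0
    rw [← mul_assoc, ha x hx, zero_mul]

/-- `R` is left P-injective: `rl(a) = aR` for every `a`. -/
def IsLeftPInjective : Prop :=
  ∀ a x : R, (∀ u : R, u * a = 0 → u * x = 0) ↔ ∃ s : R, x = a * s

/-- `R` is left 2-injective. -/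
def IsLeft2Injective : Prop :=
  ∀ (a b : R) (f : ↥(Submodule.span R ({a, b} : Set R)) →ₗ[R] R),
    ∃ g : R →ₗ[R] R, ∀ x : ↥(Submodule.span R ({a, b} : Set R)), g (x : R) = f x

/-- `R` is left FP-injective: every matrix ring over `R` is left P-injective. -/
def IsLeftFPInjective : Prop :=
  ∀ n : ℕ, IsLeftPInjective (Matrix (Fin n) (Fin n) R)

/-- A left ideal is small if `K + I = R` implies `K = R`. -/
def IsSmallLeftIdeal (I : Ideal R) : Prop := ∀ K : Ideal R, K ⊔ I = ⊤ → K = ⊤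

/-- A complement left ideal: maximal with respect to intersecting some left ideal trivially. -/
def IsComplementLeftIdeal (C : Ideal R) : Prop :=
  ∃ S : Ideal R, C ⊓ S = ⊥ ∧ ∀ C' : Ideal R, C ≤ C' → C' ⊓ S = ⊥ → C' = C

/-- A right ideal is essential in `R`. -/
def IsEssentialRIdeal (I : RIdeal R) : Prop := ∀ K : RIdeal R, K ⊓ I = ⊥ → K = ⊥

/-- The right socle: the sum of all simple (minimal) right ideals. -/
def rSocle : RIdeal R := sSup {m : RIdeal R | IsSimpleModule Rᵐᵒᵖ m}

/-- The right singular ideal. -/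
def rSingular : Set R := {a | IsEssentialRIdeal R (rAnnI R {a})}

/-- ACC on right annihilators. -/
def ACCOnRightAnnihilators : Prop :=
  ∀ f : ℕ → Set R, (∀ n, ∃ X : Set R, f n = rAnn R X) → (∀ n, f n ⊆ f (n + 1)) →
    ∃ n, ∀ m, n ≤ m → f m = f n

/-- The Jacobson radical, as a set. -/
def jacobsonSet : Set R := (TwoSidedIdeal.jacobson (⊥ : TwoSidedIdeal R) : Set R)

/-- A subset is nilpotent if products of some fixed length of its elements vanish. -/
def IsNilpotentSet (J : Set R) : Prop :=
  ∃ n : ℕ, ∀ f : Fin (n + 1) → R, (∀ i, f i ∈ J) → (List.ofFn f).prod = 0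

/-- `R` is quasi-Frobenius: left noetherian and left self-injective. -/
def IsQuasiFrobenius : Prop := IsNoetherianRing R ∧ Module.Injective R R

/-- `R` is right mininjective. -/
def IsRightMininjective : Prop :=
  ∀ (I : RIdeal R), IsSimpleModule Rᵐᵒᵖ I → ∀ f : I →ₗ[Rᵐᵒᵖ] R,
    ∃ c : R, ∀ x : I, f x = c * (x : R)

/-- `R` is left mininjective. -/
def IsLeftMininjective : Prop :=
  ∀ (I : Ideal R), IsSimpleModule R I → ∀ f : I →ₗ[R] R,
    ∃ c : R, ∀ x : I, f x = (x : R) * c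

/-- `R` is right simple injective. -/
def IsRightSimpleInjective : Prop :=
  ∀ (I : RIdeal R) (f : I →ₗ[Rᵐᵒᵖ] R), IsSimpleModule Rᵐᵒᵖ (LinearMap.range f) →
    ∃ c : R, ∀ x : I, f x = c * (x : R)

/-- `R` is left CS: every left ideal is essential in a direct summand of `R`. -/
def IsLeftCS : Prop :=
  ∀ I : Ideal R, ∃ K : Ideal R, (∃ K' : Ideal R, IsCompl K K') ∧ I ≤ K ∧
    ∀ L : Ideal R, L ≤ K → L ⊓ I = ⊥ → L = ⊥

/-- `R` is left min-CS: every minimal left ideal is essential in a direct summand. -/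
def IsLeftMinCS : Prop :=
  ∀ I : Ideal R, IsSimpleModule R I → ∃ K : Ideal R, (∃ K' : Ideal R, IsCompl K K') ∧ I ≤ K ∧
    ∀ L : Ideal R, L ≤ K → L ⊓ I = ⊥ → L = ⊥

/-- `R` is right Johns: right noetherian and every right ideal is a right annihilator. -/
def IsRightJohns : Prop :=
  IsNoetherianRing Rᵐᵒᵖ ∧ ∀ I : RIdeal R, ∃ X : Set R, (I : Set R) = rAnn R X

end Defs

section MoreDefs
variable (R : Type*) [Ring R]

/-- Left annihilator of a subset, as a left ideal. -/
def lAnnI (X : Set R) : Ideal R where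
  carrier := lAnn R X
  add_mem' := by intro a b ha hb x hx; rw [add_mul, ha x hx, hb x hx, add_zero]
  zero_mem' := by intro x hx; rw [zero_mul]
  smul_mem' := by
    intro c a ha x hx
    show c * a * x = 0
    rw [mul_assoc, ha x hx, mul_zero]

/-- A left ideal is essential in `R`. -/
def IsEssentialLIdeal (I : Ideal R) : Prop := ∀ K : Ideal R, K ⊓ I = ⊥ → K = ⊥

/-- The left singular ideal `Z_l`. -/
def lSingular : Set R := {a | IsEssentialLIdeal R (lAnnI R {a})}

end MoreDefs

/- Nilpotency of the left singular ideal `Z` follows from the ascending chain condition on right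
ideals. By the CS condition and P-injectivity, primitive idempotents are uniform, so `1` is a sum of
uniform idempotents `e`. Up to `Z` such an `e` generates a minimal right ideal and a minimal left
ideal; the former makes the right module `R` of finite length, the latter makes
`R e / (Z ∩ R e)` simple. Only finitely many simple left modules arise in this way, and a counting
argument shows that all of them embed in `R`: the ring is left Kasch. Together with P-injectivity
and uniformity this yields mininjectivity on both sides. Duals `Hom(-, R)` then do not increase
lengths, and since `R` is its own dual, comparing the lengths of `R` on the two sides forces every
map from a left ideal to `R` to extend to `R`. -/

section EssentialLeftIdeals

variable {R : Type*} [Ring R]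

theorem exists_mul_ne_zero_mem_iff {I : Ideal R} {y : R} :
    (∃ r, r * y ≠ 0 ∧ r * y ∈ I) ↔ Ideal.span {y} ⊓ I ≠ ⊥ := by
  simp only [Submodule.ne_bot_iff, Submodule.mem_inf, Ideal.mem_span_singleton']
  constructor
  · rintro ⟨r, hr, hrI⟩
    exact ⟨r * y, ⟨⟨r, rfl⟩, hrI⟩, hr⟩
  · rintro ⟨_, ⟨⟨r, rfl⟩, hrI⟩, hr⟩
    exact ⟨r, hr, hrI⟩

theorem isEssentialLIdeal_iff {I : Ideal R} :
    IsEssentialLIdeal R I ↔ ∀ y ≠ 0, ∃ r, r * y ≠ 0 ∧ r * y ∈ I := by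
  simp only [exists_mul_ne_zero_mem_iff]
  constructor
  · exact fun hI y hy h => hy (Ideal.span_singleton_eq_bot.1 (hI _ h))
  · refine fun h K hK => (Submodule.eq_bot_iff K).2 fun y hy => by_contra fun hy0 => h y hy0 ?_
    exact le_bot_iff.1 (hK ▸ inf_le_inf_right I (K.span_singleton_le_iff_mem.2 hy))

theorem IsEssentialLIdeal.mono {I J : Ideal R} (hI : IsEssentialLIdeal R I) (hIJ : I ≤ J) :
    IsEssentialLIdeal R J :=
  fun K hK => hI K (le_bot_iff.1 (hK ▸ inf_le_inf_left K hIJ))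

theorem IsEssentialLIdeal.inf {I J : Ideal R} (hI : IsEssentialLIdeal R I)
    (hJ : IsEssentialLIdeal R J) : IsEssentialLIdeal R (I ⊓ J) :=
  fun K hK => hI K (hJ _ (by rwa [inf_assoc]))

theorem isEssentialLIdeal_top : IsEssentialLIdeal R ⊤ :=
  fun K hK => by rwa [inf_top_eq] at hK

theorem IsEssentialLIdeal.colon {I : Ideal R} (hI : IsEssentialLIdeal R I) (c : R) :
    IsEssentialLIdeal R (I.colon {c}) := by
  rw [isEssentialLIdeal_iff] at hI ⊢
  intro y hy
  by_cases hyc : y * c = 0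
  · refine ⟨1, by rwa [one_mul], Submodule.mem_colon_singleton.2 ?_⟩
    rw [one_mul, smul_eq_mul, hyc]
    exact I.zero_mem
  · obtain ⟨r, hr, hrI⟩ := hI _ hyc
    rw [← mul_assoc] at hr hrI
    exact ⟨r, left_ne_zero_of_mul hr, Submodule.mem_colon_singleton.2 hrI⟩

theorem IsEssentialLIdeal.exists_forall_mul_mem {E : Ideal R} (hE : IsEssentialLIdeal R E)
    {B : Set R} (hB : ∃ b ∈ B, b ≠ 0) {t : Finset R} (ht : ↑t ⊆ B) :
    ∃ x, (∃ b ∈ B, x * b ≠ 0) ∧ ∀ b ∈ t, x * b ∈ E := by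
  classical
  induction t using Finset.induction_on with
  | empty => exact ⟨1, by simpa only [one_mul] using hB, by simp⟩
  | insert a s _ ih =>
    rw [Finset.coe_insert, Set.insert_subset_iff] at ht
    obtain ⟨x, hx, hxs⟩ := ih ht.2
    simp only [Finset.forall_mem_insert]
    by_cases hxa : x * a = 0
    · exact ⟨x, hx, hxa ▸ E.zero_mem, hxs⟩
    · obtain ⟨r, hr, hrE⟩ := isEssentialLIdeal_iff.1 hE _ hxa
      refine ⟨r * x, ⟨a, ht.1, by rwa [mul_assoc]⟩, by rwa [mul_assoc], fun b hb => ?_⟩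
      rw [mul_assoc]
      exact E.mul_mem_left r (hxs b hb)

end EssentialLeftIdeals

section SingularIdeal

variable {R : Type*} [Ring R]

theorem mem_lAnnI_singleton {x y : R} : y ∈ lAnnI R {x} ↔ y * x = 0 :=
  forall_eq (p := fun x => y * x = 0)

theorem lAnnI_mul (c x : R) : lAnnI R {c * x} = (lAnnI R {x}).colon {c} := by
  ext y
  rw [Submodule.mem_colon_singleton, mem_lAnnI_singleton, mem_lAnnI_singleton, smul_eq_mul,
    mul_assoc]

theorem lAnnI_span (S : Set R) : lAnnI R (Submodule.span Rᵐᵒᵖ S : RIdeal R) = lAnnI R S := by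
  refine le_antisymm (fun a ha x hx => ha x (Submodule.subset_span hx)) fun a ha x hx => ?_
  have hle : Submodule.span Rᵐᵒᵖ S ≤ rAnnI R {a} :=
    Submodule.span_le.2 fun y hy _ hb => (Set.mem_singleton_iff.1 hb).symm ▸ ha y hy
  exact hle hx a rfl

instance (I : Ideal R) : (lAnnI R (I : Set R)).IsTwoSided :=
  ⟨fun b ha x hx => (mul_assoc _ b x).trans (ha _ (I.mul_mem_left b hx))⟩

theorem isEssentialLIdeal_lAnnI_of_subset_lSingular {S : Set R} (hS : S.Finite)
    (hSZ : S ⊆ lSingular R) : IsEssentialLIdeal R (lAnnI R S) := by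
  induction S, hS using Set.Finite.induction_on with
  | empty => exact isEssentialLIdeal_top.mono fun _ _ x hx => hx.elim
  | @insert a s _ _ ih =>
    rw [Set.insert_subset_iff] at hSZ
    refine (IsEssentialLIdeal.inf hSZ.1 (ih hSZ.2)).mono fun y hy x hx => ?_
    rcases hx with rfl | hx
    exacts [hy.1 x rfl, hy.2 x hx]

variable (R) in
/-- The left singular ideal `Z_l`, whose underlying set is `lSingular R`. -/
def lSingularIdeal : Ideal R where
  carrier := lSingular R
  add_mem' {x y} hx hy := by
    refine (IsEssentialLIdeal.inf hx hy).mono fun a ha => ?_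
    rw [Submodule.mem_inf, mem_lAnnI_singleton, mem_lAnnI_singleton] at ha
    rw [mem_lAnnI_singleton, mul_add, ha.1, ha.2, add_zero]
  zero_mem' := isEssentialLIdeal_top.mono fun a _ => mem_lAnnI_singleton.2 (mul_zero a)
  smul_mem' c x hx := by
    change IsEssentialLIdeal R (lAnnI R {c * x})
    rw [lAnnI_mul]
    exact IsEssentialLIdeal.colon hx c

instance : (lSingularIdeal R).IsTwoSided where
  mul_mem_of_left {x} b hx := by
    refine IsEssentialLIdeal.mono hx fun a ha => ?_
    rw [mem_lAnnI_singleton] at ha ⊢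
    rw [← mul_assoc, ha, zero_mul]

theorem mem_lSingularIdeal_iff {x : R} :
    x ∈ lSingularIdeal R ↔ ∀ y ≠ 0, ∃ r, r * y ≠ 0 ∧ r * y * x = 0 := by
  change IsEssentialLIdeal R _ ↔ _
  simp only [isEssentialLIdeal_iff, mem_lAnnI_singleton]

theorem eq_zero_of_mul_eq_self {b z : R} (hz : z ∈ lSingularIdeal R) (h : b * z = b) : b = 0 := by
  by_contra hb
  obtain ⟨r, hr, hrz⟩ := mem_lSingularIdeal_iff.1 hz b hb
  exact hr (by rwa [mul_assoc, h] at hrz)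

/-- A two-sided ideal, given as a left ideal, regarded as a right ideal. -/
def toRIdeal (I : Ideal R) [I.IsTwoSided] : RIdeal R where
  __ := I.toAddSubmonoid
  smul_mem' c _ hx := I.mul_mem_right c.unop hx

theorem mem_toRIdeal {I : Ideal R} [I.IsTwoSided] {x : R} : x ∈ toRIdeal I ↔ x ∈ I :=
  Iff.rfl

theorem isEssentialLIdeal_lAnnI_lSingularIdeal [IsNoetherian Rᵐᵒᵖ R] :
    IsEssentialLIdeal R (lAnnI R (lSingularIdeal R : Set R)) := by
  obtain ⟨G, hG⟩ := IsNoetherian.noetherian (toRIdeal (lSingularIdeal R))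
  change IsEssentialLIdeal R (lAnnI R (toRIdeal (lSingularIdeal R) : RIdeal R))
  rw [← hG, lAnnI_span]
  refine isEssentialLIdeal_lAnnI_of_subset_lSingular G.finite_toSet ?_
  exact Submodule.span_le.1 hG.le

theorem exists_lAnnI_pow_succ_le [IsNoetherian Rᵐᵒᵖ R] (I : Ideal R) :
    ∃ n, lAnnI R (I ^ (n + 1) : Ideal R) ≤ lAnnI R (I ^ n : Ideal R) := by
  have hmono : Monotone fun n => toRIdeal (lAnnI R (I ^ n : Ideal R)) :=
    fun m n hmn x hx b hb => hx b (Ideal.pow_le_pow_right hmn hb)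
  obtain ⟨n, hn⟩ := monotone_stabilizes_iff_noetherian.2 ‹IsNoetherian Rᵐᵒᵖ R› ⟨_, hmono⟩
  exact ⟨n, fun x hx => (hn (n + 1) n.le_succ).ge hx⟩

/- At the index where the left annihilators of the powers of `Z` become stationary, a nonzero power
`Z ^ n` would be moved by some `x` into the essential two-sided ideal `l(Z)` without being killed,
but then `x` kills `Z ^ (n + 1)`. -/
theorem isNilpotent_lSingularIdeal [IsNoetherian Rᵐᵒᵖ R] : IsNilpotent (lSingularIdeal R) := by
  set Z := lSingularIdeal R
  obtain ⟨n, hn⟩ := exists_lAnnI_pow_succ_le Z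
  refine ⟨n, by_contra fun hne => ?_⟩
  obtain ⟨B, hB⟩ := IsNoetherian.noetherian (toRIdeal (Z ^ n))
  have hBne : ∃ b ∈ (B : Set R), b ≠ 0 := by
    by_contra! hB0
    refine hne ((Submodule.eq_bot_iff _).2 fun b hb => ?_)
    rw [← mem_toRIdeal, ← hB, Submodule.span_eq_bot.2 hB0] at hb
    exact hb
  obtain ⟨x, ⟨b, hb, hxb⟩, hx⟩ :=
    isEssentialLIdeal_lAnnI_lSingularIdeal.exists_forall_mul_mem hBne subset_rfl
  have hle : toRIdeal (Z ^ n) ≤ (toRIdeal (lAnnI R Z)).comap (LinearMap.mulLeft Rᵐᵒᵖ x) :=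
    hB ▸ Submodule.span_le.2 hx
  refine hxb (hn (fun d hd => ?_ : x ∈ lAnnI R (Z ^ (n + 1) : Ideal R)) b ?_)
  · rw [SetLike.mem_coe, Submodule.pow_succ] at hd
    refine Submodule.mul_induction_on hd (fun c hc z hz => ?_) fun c d hc hd => ?_
    · exact (mul_assoc x c z).symm.trans (hle hc z hz)
    · rw [mul_add, hc, hd, add_zero]
  · exact hB.le (Submodule.subset_span hb)

end SingularIdeal

section NilpotentIdeals

variable {R : Type*} [Ring R] {I : Ideal R}

theorem le_of_isNilpotent_of_isMaximal [I.IsTwoSided] (hI : IsNilpotent I) {M : Ideal R}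
    (hM : M.IsMaximal) : I ≤ M := by
  obtain ⟨n, hn⟩ := hI
  by_contra hIM
  have htop : I ^ n ⊔ M = ⊤ :=
    Ideal.pow_sup_eq_top (sup_comm I M ▸ hM.out.2 _ (left_lt_sup.2 hIM))
  exact hM.ne_top (by rwa [hn, Ideal.zero_eq_bot, bot_sup_eq] at htop)

theorem exists_mul_ne_zero_forall_mul_mul_eq_zero [I.IsTwoSided] (hI : IsNilpotent I) {y : R}
    (hy : y ≠ 0) : ∃ r, r * y ≠ 0 ∧ ∀ z ∈ I, z * (r * y) = 0 := by
  obtain ⟨n, hn⟩ := hI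
  by_contra! h
  have hpow : ∀ k, ∃ b ∈ I ^ k, b * y ≠ 0 := by
    intro k
    induction k with
    | zero => exact ⟨1, by rw [Submodule.pow_zero, Ideal.one_eq_top]; trivial, by rwa [one_mul]⟩
    | succ k ih =>
      obtain ⟨b, hb, hby⟩ := ih
      obtain ⟨z, hz, hzb⟩ := h b hby
      rw [Ideal.IsTwoSided.pow_succ]
      exact ⟨z * b, Ideal.mul_mem_mul hz hb, by rwa [mul_assoc]⟩
  obtain ⟨b, hb, hby⟩ := hpow n
  rw [hn] at hb
  exact hby (by rw [(Submodule.mem_bot R).1 hb, zero_mul])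

theorem exists_notMem_forall_mul_mem (hI : IsNilpotent I) {N : RIdeal R} (hN : N ≠ ⊤) :
    ∃ x ∉ N, ∀ z ∈ I, x * z ∈ N := by
  obtain ⟨n, hn⟩ := hI
  by_contra! h
  have hpow : ∀ k, ∃ b ∈ I ^ k, b ∉ N := by
    intro k
    induction k with
    | zero =>
      rw [Submodule.pow_zero, Ideal.one_eq_top]
      simpa only [Submodule.mem_top, true_and] using SetLike.exists_not_mem_of_ne_top N hN
    | succ k ih =>
      obtain ⟨b, hb, hbN⟩ := ih
      obtain ⟨z, hz, hbz⟩ := h b hbN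
      exact ⟨b * z, Submodule.pow_succ I ▸ Ideal.mul_mem_mul hb hz, hbz⟩
  obtain ⟨b, hb, hbN⟩ := hpow n
  rw [hn] at hb
  exact hbN ((Submodule.mem_bot R).1 hb ▸ N.zero_mem)

end NilpotentIdeals

section Idempotents

variable {R : Type*} [Ring R]

/-- A primitive idempotent: a nonzero idempotent `e` such that `e R e` has no idempotents besides
`0` and `e`. -/
structure IsPrimitiveIdempotent (e : R) : Prop where
  isIdempotentElem : IsIdempotentElem e
  ne_zero : e ≠ 0
  eq_zero_or_eq : ∀ g, IsIdempotentElem g → e * g = g → g * e = g → g = 0 ∨ g = e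

/-- A uniform idempotent: an idempotent `e` for which the left ideal `R e` is uniform, that is,
nonzero and such that any two of its nonzero submodules meet nontrivially. -/
structure IsUniformIdempotent (e : R) : Prop where
  isIdempotentElem : IsIdempotentElem e
  ne_zero : e ≠ 0
  exists_mul_eq_mul : ∀ a b, a * e ≠ 0 → b * e ≠ 0 →
    ∃ r s, r * (a * e) = s * (b * e) ∧ r * (a * e) ≠ 0

theorem mem_rAnnI_singleton {x y : R} : y ∈ rAnnI R {x} ↔ x * y = 0 :=
  forall_eq (p := fun a => a * y = 0)

theorem rAnnI_lt_rAnnI {e g : R} (hg : IsIdempotentElem g) (heg : e * g = g) (hge : g * e = g)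
    (hne : g ≠ e) : rAnnI R {e} < rAnnI R {g} := by
  refine SetLike.lt_iff_le_and_exists.2 ⟨fun x hx => ?_, 1 - g, ?_, fun h => ?_⟩
  · rw [mem_rAnnI_singleton] at hx ⊢
    rw [← hge, mul_assoc, hx, mul_zero]
  · rw [mem_rAnnI_singleton, hg.mul_one_sub_self]
  · rw [mem_rAnnI_singleton, mul_sub, mul_one, heg] at h
    exact hne (sub_eq_zero.1 h).symm

theorem mem_closure_isPrimitiveIdempotent [IsNoetherian Rᵐᵒᵖ R] {e : R}
    (he : IsIdempotentElem e) : e ∈ AddSubmonoid.closure {p : R | IsPrimitiveIdempotent p} := by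
  induction hN : rAnnI R {e} using WellFoundedGT.induction generalizing e with
  | ind N ih =>
  subst hN
  by_cases h0 : e = 0
  · exact h0 ▸ zero_mem _
  by_cases hprim : ∀ g, IsIdempotentElem g → e * g = g → g * e = g → g = 0 ∨ g = e
  · exact AddSubmonoid.subset_closure ⟨he, h0, hprim⟩
  push Not at hprim
  obtain ⟨g, hg, heg, hge, hg0, hne⟩ := hprim
  have hg' : IsIdempotentElem (e - g) := hg.sub he hge heg
  have hlt := rAnnI_lt_rAnnI hg heg hge hne
  have hlt' := rAnnI_lt_rAnnI hg' (by rw [mul_sub, he.eq, heg]) (by rw [sub_mul, he.eq, hge])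
    (by rwa [Ne, sub_eq_self])
  rw [← add_sub_cancel g e]
  exact add_mem (ih _ hlt hg rfl) (ih _ hlt' hg' rfl)

theorem IsUniformIdempotent.isPrimitiveIdempotent {e : R} (he : IsUniformIdempotent e) :
    IsPrimitiveIdempotent e where
  isIdempotentElem := he.isIdempotentElem
  ne_zero := he.ne_zero
  eq_zero_or_eq g hg heg hge := by
    by_contra! h
    have heg' : (e - g) * e = e - g := by rw [sub_mul, he.isIdempotentElem.eq, hge]
    obtain ⟨r, s, hrs, hr⟩ := he.exists_mul_eq_mul g (e - g) (by rw [hge]; exact h.1)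
      (by rw [heg', sub_ne_zero]; exact h.2.symm)
    rw [hge, heg'] at hrs
    rw [hge] at hr
    refine hr ?_
    calc r * g = r * g * g := by rw [mul_assoc, hg.eq]
      _ = s * (e - g) * g := by rw [hrs]
      _ = 0 := by rw [mul_assoc, sub_mul, heg, hg.eq, sub_self, mul_zero]

theorem exists_mem_forall_mul_eq_self {K K' : Ideal R} (h : IsCompl K K') :
    ∃ f ∈ K, ∀ k ∈ K, k * f = k := by
  obtain ⟨f, hf, f', hf', hff'⟩ :=
    Submodule.mem_sup.1 (h.sup_eq_top ▸ Submodule.mem_top : (1 : R) ∈ K ⊔ K')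
  refine ⟨f, hf, fun k hk => ?_⟩
  have hkf' : k - k * f = k * f' := by rw [sub_eq_iff_eq_add', ← mul_add, hff', mul_one]
  have hmem : k - k * f ∈ K ⊓ K' :=
    ⟨sub_mem hk (K.mul_mem_left k hf), hkf' ▸ K'.mul_mem_left k hf'⟩
  rw [h.inf_eq_bot, Submodule.mem_bot, sub_eq_zero] at hmem
  exact hmem.symm

variable (R) in
/-- The left CS condition for principal left ideals only: every principal left ideal is essential
in a direct summand of `R`. -/
def IsLeftPrincipallyCS : Prop :=
  ∀ a : R, ∃ K : Ideal R, (∃ K' : Ideal R, IsCompl K K') ∧ Ideal.span {a} ≤ K ∧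
    ∀ L : Ideal R, L ≤ K → L ⊓ Ideal.span {a} = ⊥ → L = ⊥

theorem IsLeftPrincipallyCS.exists_isIdempotentElem (hCS : IsLeftPrincipallyCS R) (a : R) :
    ∃ f, IsIdempotentElem f ∧ a * f = a ∧
      ∀ y, y * f ≠ 0 → ∃ r, r * (y * f) ≠ 0 ∧ r * (y * f) ∈ Ideal.span {a} := by
  obtain ⟨K, ⟨K', hKK'⟩, haK, hess⟩ := hCS a
  obtain ⟨f, hfK, hf⟩ := exists_mem_forall_mul_eq_self hKK'
  refine ⟨f, hf f hfK, hf a (haK (Ideal.mem_span_singleton_self a)), fun y hy => ?_⟩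
  refine exists_mul_ne_zero_mem_iff.2 fun h => hy (Ideal.span_singleton_eq_bot.1 (hess _ ?_ h))
  exact (K.span_singleton_le_iff_mem).2 (K.mul_mem_left y hfK)

theorem IsPrimitiveIdempotent.exists_mul_mul_mul_eq_self (hP : IsLeftPInjective R) {e f b : R}
    (he : IsPrimitiveIdempotent e) (hf : IsIdempotentElem f)
    (hfe : ∀ u, u * (f * e) = 0 → u * f = 0) (hb : b ≠ 0) (hbe : b * e = b) (hbf : b * f = b) :
    ∃ s, e * s * f * e = e := by
  obtain ⟨s, hs⟩ := (hP (f * e) f).1 hfe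
  refine ⟨s, (he.eq_zero_or_eq _ ?_ ?_ ?_).resolve_left fun h0 => hb ?_⟩
  · calc e * s * f * e * (e * s * f * e) = e * s * (f * (e * e) * s) * f * e := by
          simp only [mul_assoc]
      _ = e * s * (f * f) * e := by rw [he.isIdempotentElem.eq, ← hs]; simp only [mul_assoc]
      _ = e * s * f * e := by rw [hf.eq]
  · simp only [← mul_assoc, he.isIdempotentElem.eq]
  · rw [mul_assoc, he.isIdempotentElem.eq]
  · calc b = b * f * f * e := by rw [hbf, hbf, hbe]
      _ = b * f * e * s * f * e := by rw [mul_assoc b f e, mul_assoc b (f * e) s, ← hs]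
      _ = b * (e * s * f * e) := by rw [hbf]; simp only [mul_assoc]
      _ = 0 := by rw [h0, mul_zero]

theorem IsPrimitiveIdempotent.isUniformIdempotent (hP : IsLeftPInjective R)
    (hCS : IsLeftPrincipallyCS R) {e : R} (he : IsPrimitiveIdempotent e) :
    IsUniformIdempotent e := by
  have hee := he.isIdempotentElem.eq
  refine ⟨hee, he.ne_zero, fun a b ha hb => ?_⟩
  obtain ⟨f, hf, haf, hess⟩ := hCS.exists_isIdempotentElem (a * e)
  have hspan : ∀ x ∈ Ideal.span {a * e}, x * e = x := by
    intro x hx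
    obtain ⟨t, rfl⟩ := Ideal.mem_span_singleton'.1 hx
    rw [mul_assoc, mul_assoc, hee]
  have hfe : ∀ u, u * (f * e) = 0 → u * f = 0 := by
    intro u hu
    by_contra huf
    obtain ⟨r, hr, hrI⟩ := hess u huf
    rw [← hspan _ hrI, mul_assoc, mul_assoc, hu, mul_zero] at hr
    exact hr rfl
  obtain ⟨s, hs⟩ :=
    he.exists_mul_mul_mul_eq_self hP hf hfe ha (by rw [mul_assoc, hee]) haf
  have hy : b * e * s * f * e = b * e := by
    simpa only [mul_assoc] using congrArg (b * ·) hs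
  obtain ⟨r, hr, hrI⟩ := hess (b * e * s) (left_ne_zero_of_mul (hy ▸ hb))
  obtain ⟨t, ht⟩ := Ideal.mem_span_singleton'.1 hrI
  refine ⟨t, r, ?_, ht ▸ hr⟩
  rw [ht, ← hspan _ hrI, mul_assoc r, hy]

variable (R) in
/-- `1` is a sum of uniform idempotents, so that `R` is a sum of finitely many uniform left ideals
generated by idempotents. No orthogonality is required. -/
def HasUniformDecomposition : Prop :=
  (1 : R) ∈ AddSubmonoid.closure {e : R | IsUniformIdempotent e}

theorem IsLeftPInjective.hasUniformDecomposition [IsNoetherian Rᵐᵒᵖ R]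
    (hP : IsLeftPInjective R) (hCS : IsLeftPrincipallyCS R) : HasUniformDecomposition R :=
  AddSubmonoid.closure_mono (fun _ he => IsPrimitiveIdempotent.isUniformIdempotent hP hCS he)
    (mem_closure_isPrimitiveIdempotent .one)

end Idempotents

section UniformIdempotents

variable {R : Type*} [Ring R]

theorem exists_mem_mul_left_notMem {σ : Type*} [SetLike σ R] [AddSubmonoidClass σ R] {S : Set R}
    (hS : (1 : R) ∈ AddSubmonoid.closure S) {N : σ} {x : R} (hx : x ∉ N) : ∃ e ∈ S, e * x ∉ N := by
  by_contra! h
  have hle : AddSubmonoid.closure S ≤ (AddSubmonoid.ofClass N).comap (AddMonoidHom.mulRight x) :=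
    AddSubmonoid.closure_le.2 h
  exact hx (one_mul x ▸ hle hS)

theorem exists_mem_mul_right_notMem {σ : Type*} [SetLike σ R] [AddSubmonoidClass σ R] {S : Set R}
    (hS : (1 : R) ∈ AddSubmonoid.closure S) {N : σ} {x : R} (hx : x ∉ N) : ∃ e ∈ S, x * e ∉ N := by
  by_contra! h
  have hle : AddSubmonoid.closure S ≤ (AddSubmonoid.ofClass N).comap (AddMonoidHom.mulLeft x) :=
    AddSubmonoid.closure_le.2 h
  exact hx (mul_one x ▸ hle hS)

theorem IsUniformIdempotent.notMem_lSingularIdeal {e : R} (he : IsUniformIdempotent e) :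
    e ∉ lSingularIdeal R :=
  fun h => he.ne_zero (eq_zero_of_mul_eq_self h he.isIdempotentElem.eq)

theorem IsUniformIdempotent.exists_eq_mul_right {e x : R} (hP : IsLeftPInjective R)
    (he : IsUniformIdempotent e) (hx : e * x = x) (hxZ : x ∉ lSingularIdeal R) :
    ∃ r, e = x * r := by
  refine (hP x e).1 fun y hyx => by_contra fun hye => hxZ (mem_lSingularIdeal_iff.2 fun w hw => ?_)
  by_cases hwe : w * e = 0
  · exact ⟨1, by rwa [one_mul], by rw [one_mul, ← hx, ← mul_assoc, hwe, zero_mul]⟩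
  obtain ⟨r, s, hrs, hr⟩ := he.exists_mul_eq_mul w y hwe hye
  refine ⟨r, fun h0 => hr (by rw [← mul_assoc, h0, zero_mul]), ?_⟩
  calc r * w * x = r * (w * e) * x := by rw [mul_assoc r (w * e), mul_assoc w, hx, mul_assoc]
    _ = s * (y * x) := by rw [hrs, mul_assoc, mul_assoc, hx]
    _ = 0 := by rw [hyx, mul_zero]

theorem IsUniformIdempotent.exists_eq_mul_left {e x : R} (hP : IsLeftPInjective R)
    (hD : HasUniformDecomposition R) (he : IsUniformIdempotent e) (hx : x * e = x)
    (hxZ : x ∉ lSingularIdeal R) : ∃ s, e = s * x := by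
  obtain ⟨j, hj, hjx⟩ := exists_mem_mul_left_notMem hD hxZ
  have hjj : j * j = j := hj.isIdempotentElem.eq
  obtain ⟨t, ht⟩ := hj.exists_eq_mul_right hP (by rw [← mul_assoc, hjj]) hjx
  have hxet : j * (x * (e * t)) = j := by rw [← mul_assoc x, hx, ← mul_assoc, ← ht]
  refine ⟨e * t * j, ((he.isPrimitiveIdempotent.eq_zero_or_eq _ ?_ ?_ ?_).resolve_left ?_).symm⟩
  · calc e * t * j * x * (e * t * j * x) = e * t * (j * (x * (e * t))) * j * x := by
          simp only [mul_assoc]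
      _ = e * t * j * x := by rw [hxet, mul_assoc (e * t), hjj]
  · simp only [← mul_assoc, he.isIdempotentElem.eq]
  · rw [mul_assoc, hx]
  · intro h0
    refine hj.ne_zero ?_
    calc j = j * (x * (e * t)) * (j * (x * (e * t))) := by rw [hxet, hjj]
      _ = j * x * (e * t * j * x) * (e * t) := by simp only [mul_assoc]
      _ = 0 := by rw [h0, mul_zero, zero_mul]

end UniformIdempotents

section FiniteLength

theorem covBy_sup_span_singleton {A M : Type*} [Ring A] [AddCommGroup M] [Module A M]
    {N : Submodule A M} {y : M} (hy : y ∉ N) (h : ∀ c : A, c • y ∉ N → ∃ t : A, t • c • y = y) :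
    N ⋖ N ⊔ Submodule.span A {y} := by
  have hyN : y ∈ N ⊔ Submodule.span A {y} :=
    Submodule.mem_sup_right (Submodule.mem_span_singleton_self y)
  refine ⟨lt_of_le_of_ne le_sup_left fun heq => hy (heq ▸ hyN), fun K hNK hKN => hKN.not_ge ?_⟩
  obtain ⟨k, hk, hkN⟩ := SetLike.exists_of_lt hNK
  obtain ⟨n, hn, _, hc, rfl⟩ := Submodule.mem_sup.1 (hKN.le hk)
  obtain ⟨c, rfl⟩ := Submodule.mem_span_singleton.1 hc
  have hcN : c • y ∉ N := fun hc => hkN (add_mem hn hc)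
  obtain ⟨t, ht⟩ := h c hcN
  have hcK : c • y ∈ K := (Submodule.add_mem_iff_right K (hNK.le hn)).1 hk
  exact sup_le hNK.le ((Submodule.span_singleton_le_iff_mem _ _).2 (ht ▸ K.smul_mem t hcK))

theorem isFiniteLength_of_forall_exists_covBy {A M : Type*} [Ring A] [AddCommGroup M] [Module A M]
    [IsNoetherian A M] (h : ∀ N : Submodule A M, N ≠ ⊤ → ∃ N', N ⋖ N') : IsFiniteLength A M := by
  obtain ⟨N, hN, hmax⟩ := WellFounded.has_min (wellFounded_gt (α := Submodule A M))
    {N | IsFiniteLength A N} ⟨⊥, IsFiniteLength.of_subsingleton⟩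
  by_cases htop : N = ⊤
  · exact Submodule.topEquiv.isFiniteLength (htop ▸ hN)
  obtain ⟨N', hcov⟩ := h N htop
  have : IsSimpleModule A (N' ⧸ N.comap N'.subtype) := (covBy_iff_quot_is_simple hcov.le).1 hcov
  exact absurd hcov.lt (hmax N' (.of_simple_quotient
    ((Submodule.comapSubtypeEquivOfLe hcov.le).symm.isFiniteLength hN)))

variable {R : Type*} [Ring R]

theorem IsLeftPInjective.isFiniteLength_mulOpposite [IsNoetherian Rᵐᵒᵖ R]
    (hP : IsLeftPInjective R) (hD : HasUniformDecomposition R) : IsFiniteLength Rᵐᵒᵖ R := by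
  refine isFiniteLength_of_forall_exists_covBy fun N hN => ?_
  obtain ⟨x, hxN, hxZ⟩ := exists_notMem_forall_mul_mem isNilpotent_lSingularIdeal hN
  obtain ⟨e, he, hxe⟩ := exists_mem_mul_right_notMem hD hxN
  refine ⟨_, covBy_sup_span_singleton hxe fun c hc => ?_⟩
  rw [MulOpposite.smul_eq_mul_unop, mul_assoc] at hc ⊢
  obtain ⟨t, ht⟩ := he.exists_eq_mul_right hP (x := e * c.unop)
    (by rw [← mul_assoc, he.isIdempotentElem.eq]) fun hZ => hc (hxZ _ hZ)
  exact ⟨.op t, by rw [MulOpposite.smul_eq_mul_unop, MulOpposite.unop_op, mul_assoc, ← ht]⟩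

end FiniteLength

section Kasch

variable {R : Type*} [Ring R]

theorem nonempty_quotient_equiv_of_le_colon {M N : Ideal R} (hM : M.IsMaximal) (hN : N.IsMaximal)
    {x : R} (hx : x ∉ N) (hle : M ≤ N.colon {x}) : Nonempty ((R ⧸ M) ≃ₗ[R] R ⧸ N) := by
  have := isSimpleModule_iff_isCoatom.2 (Ideal.isMaximal_def.1 hM)
  have := isSimpleModule_iff_isCoatom.2 (Ideal.isMaximal_def.1 hN)
  let f : (R ⧸ M) →ₗ[R] R ⧸ N :=
    M.mapQ N (LinearMap.toSpanSingleton R R x) fun _ hm => Submodule.mem_colon_singleton.1 (hle hm)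
  have hf : f ≠ 0 := by
    intro h
    have hfx : f (M.mkQ 1) = N.mkQ x :=
      (Submodule.mapQ_apply ..).trans (congrArg N.mkQ (one_smul R x))
    rw [h, LinearMap.zero_apply, eq_comm, Submodule.mkQ_apply, Submodule.Quotient.mk_eq_zero] at hfx
    exact hx hfx
  exact ⟨LinearEquiv.ofBijective f (LinearMap.bijective_of_ne_zero hf)⟩

theorem exists_lAnnI_mul_eq {M : Ideal R} {u : R} (φ : (R ⧸ M) ≃ₗ[R] R ⧸ lAnnI R {u}) :
    ∃ t, lAnnI R {t * u} = M := by
  obtain ⟨t, ht⟩ := (lAnnI R {u}).mkQ_surjective (φ (M.mkQ 1))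
  refine ⟨t, Submodule.ext fun r => ?_⟩
  have hr : φ (M.mkQ r) = (lAnnI R {u}).mkQ (r * t) := by
    rw [← smul_eq_mul r t, map_smul, ht, ← map_smul, ← map_smul, smul_eq_mul, mul_one]
  rw [← M.ker_mkQ, LinearMap.mem_ker, ← φ.map_eq_zero_iff, hr, ← LinearMap.mem_ker,
    Submodule.ker_mkQ, mem_lAnnI_singleton, mem_lAnnI_singleton, mul_assoc]

theorem IsUniformIdempotent.isMaximal_colon (hP : IsLeftPInjective R)
    (hD : HasUniformDecomposition R) {e : R} (he : IsUniformIdempotent e) :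
    ((lSingularIdeal R).colon {e}).IsMaximal := by
  simp only [Ideal.isMaximal_iff, Submodule.mem_colon_singleton, smul_eq_mul, one_mul]
  refine ⟨he.notMem_lSingularIdeal, fun J x hle hxe hxJ => ?_⟩
  obtain ⟨s, hs⟩ := he.exists_eq_mul_left hP hD (by rw [mul_assoc, he.isIdempotentElem.eq]) hxe
  have hmem : 1 - s * x ∈ J := by
    refine hle (Submodule.mem_colon_singleton.2 ?_)
    rw [smul_eq_mul, sub_mul, one_mul, mul_assoc, ← hs, sub_self]
    exact zero_mem _
  simpa only [sub_add_cancel] using add_mem hmem (J.mul_mem_left s hxJ)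

theorem IsUniformIdempotent.lAnnI_eq_colon (hP : IsLeftPInjective R)
    (hD : HasUniformDecomposition R) {e u : R} (he : IsUniformIdempotent e) (heu : e * u = u)
    (hu : u ≠ 0) (hZu : ∀ z ∈ lSingularIdeal R, z * u = 0) :
    lAnnI R {u} = (lSingularIdeal R).colon {e} := by
  refine ((he.isMaximal_colon hP hD).eq_of_le (fun h => hu ?_) fun r hr => ?_).symm
  · simpa only [one_mul] using mem_lAnnI_singleton.1 ((Ideal.eq_top_iff_one _).1 h)
  · rw [mem_lAnnI_singleton, ← heu, ← mul_assoc]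
    exact hZu _ (Submodule.mem_colon_singleton.1 hr)

theorem IsUniformIdempotent.exists_mem_lAnnI_eq_colon (hP : IsLeftPInjective R)
    (hZ : IsNilpotent (lSingularIdeal R)) {S : Set R} (hS : ∀ p ∈ S, IsUniformIdempotent p)
    (h1 : (1 : R) ∈ AddSubmonoid.closure S) {e : R} (he : IsUniformIdempotent e) :
    ∃ p ∈ S, ∃ u ≠ 0, u * e = u ∧ lAnnI R {u} = (lSingularIdeal R).colon {p} := by
  obtain ⟨r, hr, hZr⟩ := exists_mul_ne_zero_forall_mul_mul_eq_zero hZ he.ne_zero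
  obtain ⟨p, hpS, hpr⟩ := exists_mem_mul_left_notMem (N := (⊥ : Ideal R)) h1 hr
  have hp := hS p hpS
  refine ⟨p, hpS, p * (r * e), hpr, ?_, hp.lAnnI_eq_colon hP (AddSubmonoid.closure_mono hS h1) ?_
    hpr fun z hz => ?_⟩
  · rw [mul_assoc, mul_assoc, he.isIdempotentElem.eq]
  · rw [← mul_assoc, hp.isIdempotentElem.eq]
  · rw [← mul_assoc]
    exact hZr _ (Ideal.mul_mem_right p _ hz)

theorem IsUniformIdempotent.nonempty_quotient_colon_equiv (hP : IsLeftPInjective R)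
    (hD : HasUniformDecomposition R) {e e' u w : R} (he : IsUniformIdempotent e)
    (he' : IsUniformIdempotent e') (hu : u ≠ 0) (hue : u * e = u) (hwe' : w * e' = w)
    (huw : lAnnI R {u} = lAnnI R {w}) :
    Nonempty ((R ⧸ (lSingularIdeal R).colon {e}) ≃ₗ[R] R ⧸ (lSingularIdeal R).colon {e'}) := by
  simp only [Ideal.ext_iff, mem_lAnnI_singleton] at huw
  obtain ⟨c, hc⟩ := (hP u w).1 fun a => (huw a).1
  obtain ⟨d, hd⟩ := (hP w u).1 fun a => (huw a).2
  refine nonempty_quotient_equiv_of_le_colon (he.isMaximal_colon hP hD) (he'.isMaximal_colon hP hD)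
    (x := e * c) (fun hmem => hu ?_) fun r hr => ?_
  · rw [Submodule.mem_colon_singleton, smul_eq_mul] at hmem
    refine eq_zero_of_mul_eq_self (Ideal.mul_mem_right d _ hmem) ?_
    calc u * (e * c * e' * d) = u * e * c * e' * d := by simp only [mul_assoc]
      _ = u := by rw [hue, ← hc, hwe', ← hd]
  · simp only [Submodule.mem_colon_singleton, smul_eq_mul] at hr ⊢
    rw [← mul_assoc, mul_assoc]
    exact Ideal.mul_mem_right _ _ hr

theorem exists_rel_apply_of_finite {ι : Type*} [Finite ι] (s : Setoid ι) {σ : ι → ι}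
    (hσ : ∀ i j, s (σ i) (σ j) → s i j) (i : ι) : ∃ j, s (σ j) i := by
  let F : Quotient s → Quotient s := fun q => ⟦σ q.out⟧
  have hF : Function.Injective F := fun p q hpq =>
    Quotient.out_equiv_out.1 (hσ _ _ (Quotient.exact hpq))
  obtain ⟨q, hq⟩ := Finite.surjective_of_injective hF ⟦i⟧
  exact ⟨q.out, Quotient.exact hq⟩

/- Sending `i` to the idempotent `σ i` for which the simple module `R / Z.colon {σ i}` embeds in
`R i` is injective on isomorphism classes of tops `R / Z.colon {i}`. There are finitely many of
these classes, so every top embeds in `R`. -/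
theorem IsUniformIdempotent.exists_lAnnI_eq_colon (hP : IsLeftPInjective R)
    (hZ : IsNilpotent (lSingularIdeal R)) (hD : HasUniformDecomposition R) {e : R}
    (he : IsUniformIdempotent e) : ∃ u, lAnnI R {u} = (lSingularIdeal R).colon {e} := by
  obtain ⟨l, hl, hl1⟩ := AddSubmonoid.exists_list_of_mem_closure hD
  let S : Set R := insert e {p | p ∈ l}
  have hS : ∀ p ∈ S, IsUniformIdempotent p := Set.forall_mem_insert.2 ⟨he, hl⟩
  have h1 : (1 : R) ∈ AddSubmonoid.closure S :=
    hl1 ▸ list_sum_mem fun p hp => AddSubmonoid.subset_closure (Or.inr hp)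
  have : Finite S := l.finite_toSet.insert e
  choose σ hσS u hu huS hσ using fun i : S => (hS i i.2).exists_mem_lAnnI_eq_colon hP hZ hS h1
  let s : Setoid S :=
    { r i j := Nonempty ((R ⧸ (lSingularIdeal R).colon {(i : R)}) ≃ₗ[R]
        R ⧸ (lSingularIdeal R).colon {(j : R)})
      iseqv := ⟨fun _ => ⟨.refl _ _⟩, fun ⟨φ⟩ => ⟨φ.symm⟩, fun ⟨φ⟩ ⟨ψ⟩ => ⟨φ.trans ψ⟩⟩ }
  have hσs : ∀ i j, s ⟨σ i, hσS i⟩ ⟨σ j, hσS j⟩ → s i j := by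
    rintro i j ⟨φ⟩
    rw [← hσ j] at φ
    obtain ⟨t, ht⟩ := exists_lAnnI_mul_eq φ
    exact (hS i i.2).nonempty_quotient_colon_equiv hP hD (hS j j.2) (hu i) (huS i)
      (by rw [mul_assoc, huS j]) ((hσ i).trans ht.symm)
  obtain ⟨j, ⟨φ⟩⟩ := exists_rel_apply_of_finite s hσs ⟨e, Set.mem_insert e _⟩
  replace φ := φ.symm
  rw [← hσ j] at φ
  obtain ⟨t, ht⟩ := exists_lAnnI_mul_eq φ
  exact ⟨t * u j, ht⟩

variable (R) in
/-- `R` is left Kasch: every simple left `R`-module embeds in `R`, or equivalently every maximal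
left ideal is the left annihilator of an element. -/
def IsLeftKasch : Prop :=
  ∀ M : Ideal R, M.IsMaximal → ∃ u, lAnnI R {u} = M

theorem IsLeftPInjective.isLeftKasch (hP : IsLeftPInjective R)
    (hZ : IsNilpotent (lSingularIdeal R)) (hD : HasUniformDecomposition R) : IsLeftKasch R := by
  intro M hM
  obtain ⟨e, he, heM⟩ := exists_mem_mul_right_notMem hD ((Ideal.ne_top_iff_one M).1 hM.ne_top)
  rw [one_mul] at heM
  obtain ⟨u, hu⟩ := he.exists_lAnnI_eq_colon hP hZ hD
  obtain ⟨φ⟩ := nonempty_quotient_equiv_of_le_colon (he.isMaximal_colon hP hD) hM heM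
    (Submodule.colon_mono (le_of_isNilpotent_of_isMaximal hZ hM) subset_rfl)
  replace φ := φ.symm
  rw [← hu] at φ
  obtain ⟨t, ht⟩ := exists_lAnnI_mul_eq φ
  exact ⟨t * u, ht⟩

theorem IsLeftKasch.isMaximal_lAnnI_singleton (hK : IsLeftKasch R) (hP : IsLeftPInjective R) {b : R}
    (hb0 : b ≠ 0) (hb : ∀ r, b * r ≠ 0 → ∃ t, b = b * r * t) : (lAnnI R {b}).IsMaximal := by
  obtain ⟨M, hM, hbM⟩ := Ideal.exists_le_maximal (lAnnI R {b}) fun htop =>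
    hb0 (by simpa using mem_lAnnI_singleton.1 ((Ideal.eq_top_iff_one _).1 htop))
  obtain ⟨c, rfl⟩ := hK M hM
  obtain ⟨s, rfl⟩ := (hP b c).1 fun y hy =>
    mem_lAnnI_singleton.1 (hbM (mem_lAnnI_singleton.2 hy))
  obtain ⟨t, ht⟩ := hb s fun h0 => hM.ne_top ((Ideal.eq_top_iff_one _).2
    (by rw [mem_lAnnI_singleton, h0, mul_zero]))
  suffices h : lAnnI R {b * s} ≤ lAnnI R {b} from le_antisymm hbM h ▸ hM
  intro y hy
  rw [mem_lAnnI_singleton] at hy ⊢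
  rw [ht, ← mul_assoc, hy, zero_mul]

end Kasch

section Mininjective

variable {R : Type*} [Ring R]

theorem IsLeftPInjective.isLeftMininjective (hP : IsLeftPInjective R) : IsLeftMininjective R := by
  intro I hI f
  have := IsSimpleModule.nontrivial R I
  obtain ⟨x, hx⟩ := exists_ne (0 : I)
  have hspan := IsSimpleModule.toSpanSingleton_surjective R hx
  obtain ⟨c, hc⟩ := (hP x (f x)).1 fun u hu => by
    rw [← smul_eq_mul, ← map_smul, show u • x = 0 from Subtype.ext hu, map_zero]
  refine ⟨c, fun y => ?_⟩
  obtain ⟨r, rfl⟩ := hspan y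
  rw [LinearMap.toSpanSingleton_apply, map_smul, hc, Submodule.coe_smul, smul_eq_mul, smul_eq_mul,
    mul_assoc]

theorem IsUniformIdempotent.exists_eq_mul_of_isMaximal_lAnnI {e a b : R}
    (he : IsUniformIdempotent e) (ha : a ≠ 0) (hb : b ≠ 0) (hae : a * e = a) (hbe : b * e = b)
    (hM : (lAnnI R {b}).IsMaximal) : ∃ c, b = c * a := by
  obtain ⟨r, s, hrs, hr⟩ := he.exists_mul_eq_mul a b (by rwa [hae]) (by rwa [hbe])
  rw [hae, hbe] at hrs
  rw [hae] at hr
  obtain ⟨t, i, hi, hti⟩ := hM.exists_inv (x := s) fun hs =>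
    hr (hrs.trans (mem_lAnnI_singleton.1 hs))
  refine ⟨t * r, ?_⟩
  calc b = t * s * b + i * b := by rw [← add_mul, hti, one_mul]
    _ = t * r * a := by rw [mem_lAnnI_singleton.1 hi, add_zero, mul_assoc, ← hrs, ← mul_assoc]

theorem IsLeftKasch.isRightMininjective (hK : IsLeftKasch R) (hP : IsLeftPInjective R)
    (hD : HasUniformDecomposition R) : IsRightMininjective R := by
  intro I hI f
  have := IsSimpleModule.nontrivial Rᵐᵒᵖ I
  obtain ⟨x, hx⟩ := exists_ne (0 : I)
  obtain ⟨e, he, hxe⟩ := exists_mem_mul_right_notMem (N := (⊥ : Ideal R)) (x := (x : R)) hD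
    (by simpa using hx)
  obtain ⟨a, ha0, hae⟩ : ∃ a : I, a ≠ 0 ∧ MulOpposite.op e • a = a :=
    ⟨MulOpposite.op e • x, fun h => hxe (congrArg Subtype.val h),
      by rw [smul_smul, ← MulOpposite.op_mul, he.isIdempotentElem.eq]⟩
  suffices hc : ∃ c, f a = c * a by
    obtain ⟨c, hc⟩ := hc
    refine ⟨c, fun y => ?_⟩
    obtain ⟨r, rfl⟩ := IsSimpleModule.toSpanSingleton_surjective Rᵐᵒᵖ ha0 y
    rw [LinearMap.toSpanSingleton_apply, map_smul, hc, Submodule.coe_smul, mul_smul_comm]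
  by_cases hb : f a = 0
  · exact ⟨0, by rw [hb, zero_mul]⟩
  have hf : ∀ r, f a * r = f (MulOpposite.op r • a) := fun r => by rw [map_smul, op_smul_eq_mul]
  refine he.exists_eq_mul_of_isMaximal_lAnnI (Subtype.coe_injective.ne ha0) hb
    (congrArg Subtype.val hae) (by rw [hf, hae])
    (hK.isMaximal_lAnnI_singleton hP hb fun r hr => ?_)
  have hra : MulOpposite.op r • a ≠ 0 := fun h => hr (by rw [hf, h, map_zero])
  obtain ⟨t, ht⟩ := IsSimpleModule.toSpanSingleton_surjective Rᵐᵒᵖ hra a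
  refine ⟨t.unop, ?_⟩
  rw [hf, ← MulOpposite.smul_eq_mul_unop, ← map_smul]
  exact congrArg f ht.symm

end Mininjective

section Duality

variable {A B Q : Type*} [Ring A] [Ring B] [AddCommGroup Q] [Module A Q] [Module B Q]

variable (A B Q) in
/-- The `A`-module `Q` is mininjective relative to scalars in `B`: every `A`-linear map from a
simple submodule of `Q` to `Q` is multiplication by an element of `B`. For `Q = R` this is left
mininjectivity if `(A, B) = (R, Rᵐᵒᵖ)`, and right mininjectivity if `(A, B) = (Rᵐᵒᵖ, R)`. -/
def IsMininjective : Prop :=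
  ∀ S : Submodule A Q, IsSimpleModule A S → ∀ f : S →ₗ[A] Q, ∃ c : B, ∀ x : S, f x = c • (x : Q)

variable {M : Type*} [AddCommGroup M] [Module A M]

theorem length_submodule_add_length_quotient (N : Submodule A M) :
    Module.length A N + Module.length A (M ⧸ N) = Module.length A M :=
  (Module.length_eq_add_of_exact N.subtype N.mkQ N.injective_subtype N.mkQ_surjective
    (LinearMap.exact_subtype_mkQ N)).symm

variable [SMulCommClass A B Q]

theorem IsMininjective.length_linearMap_le_one (hQ : IsMininjective A B Q) [IsSimpleModule A M] :
    Module.length B (M →ₗ[A] Q) ≤ 1 := by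
  rcases subsingleton_or_nontrivial (M →ₗ[A] Q) with _ | hnt
  · rw [Module.length_eq_zero]
    exact zero_le_one
  have : IsSimpleModule B (M →ₗ[A] Q) := by
    refine isSimpleModule_iff_toSpanSingleton_surjective.2 ⟨hnt, fun f hf g => ?_⟩
    let φ : M ≃ₗ[A] LinearMap.range f := .ofInjective f (LinearMap.injective_of_ne_zero hf)
    obtain ⟨c, hc⟩ := hQ _ (.congr φ.symm) (g ∘ₗ φ.symm)
    refine ⟨c, LinearMap.ext fun x => ?_⟩
    calc c • f x = g (φ.symm (φ x)) := (hc (φ x)).symm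
      _ = g x := by rw [φ.symm_apply_apply]
  exact (Module.length_eq_one B _).le

theorem exact_lcomp_mkQ_lcomp_subtype (N : Submodule A M) :
    Function.Exact (LinearMap.lcomp B Q N.mkQ) (LinearMap.lcomp B Q N.subtype) := by
  refine fun f => ⟨fun hf => ?_, ?_⟩
  · have hN : N ≤ LinearMap.ker f := fun x hx => LinearMap.congr_fun hf ⟨x, hx⟩
    exact ⟨N.liftQ f hN, N.liftQ_mkQ f hN⟩
  · rintro ⟨g, rfl⟩
    ext x
    exact (congrArg g ((LinearMap.exact_subtype_mkQ N).apply_apply_eq_zero x)).trans (map_zero g)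

theorem length_linearMap_eq_add (N : Submodule A M) :
    Module.length B (M →ₗ[A] Q) = Module.length B ((M ⧸ N) →ₗ[A] Q) +
      Module.length B (LinearMap.range (LinearMap.lcomp B Q N.subtype)) := by
  refine Module.length_eq_add_of_exact _ (LinearMap.lcomp B Q N.subtype).rangeRestrict
    (LinearMap.lcomp_injective_of_surjective _ N.mkQ_surjective)
    (LinearMap.surjective_rangeRestrict _) fun f => ?_
  rw [← exact_lcomp_mkQ_lcomp_subtype N f, Subtype.ext_iff]
  rfl

theorem IsMininjective.length_linearMap_le (hQ : IsMininjective A B Q) (hM : IsFiniteLength A M) :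
    Module.length B (M →ₗ[A] Q) ≤ Module.length A M := by
  induction hM with
  | of_subsingleton =>
    rw [Module.length_eq_zero]
    exact zero_le
  | @of_simple_quotient M _ _ N _ _ ih =>
    rw [length_linearMap_eq_add N, ← length_submodule_add_length_quotient N,
      Module.length_eq_one A (M ⧸ N), add_comm]
    exact add_le_add ((Module.length_le_of_injective _ (Submodule.injective_subtype _)).trans ih)
      hQ.length_linearMap_le_one

theorem IsMininjective.lcomp_subtype_surjective (hQ : IsMininjective A B Q)
    (hM : IsFiniteLength A M) (hle : Module.length A M ≤ Module.length B (M →ₗ[A] Q))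
    (N : Submodule A M) : Function.Surjective (LinearMap.lcomp B Q N.subtype) := by
  obtain ⟨_, _⟩ := isFiniteLength_iff_isNoetherian_isArtinian.1 hM
  have hN : IsFiniteLength A N := Module.length_ne_top_iff.1 Module.length_ne_top
  have hQuot : IsFiniteLength A (M ⧸ N) := Module.length_ne_top_iff.1 Module.length_ne_top
  have hHom : Module.length B (N →ₗ[A] Q) ≤ Module.length A N := hQ.length_linearMap_le hN
  have hRange : Module.length A N ≤
      Module.length B (LinearMap.range (LinearMap.lcomp B Q N.subtype)) := by
    refine (ENat.add_le_add_iff_left (Module.length_ne_top_iff.2 hQuot)).1 ?_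
    rw [add_comm, length_submodule_add_length_quotient]
    refine hle.trans ((length_linearMap_eq_add N).trans_le ?_)
    gcongr
    exact hQ.length_linearMap_le hQuot
  obtain ⟨_, _⟩ := isFiniteLength_iff_isNoetherian_isArtinian.1 (Module.length_ne_top_iff.1
    (ne_top_of_le_ne_top (Module.length_ne_top_iff.2 hN) hHom))
  rw [← LinearMap.range_eq_top]
  by_contra hne
  exact (Submodule.length_lt hne).not_ge (hHom.trans hRange)

end Duality

section Ikeda

variable {R : Type*} [Ring R]

theorem isQuasiFrobenius_of_isMininjective (hfl : IsFiniteLength Rᵐᵒᵖ R)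
    (hl : IsLeftMininjective R) (hr : IsRightMininjective R) : IsQuasiFrobenius R := by
  have hl' : IsMininjective R Rᵐᵒᵖ R := fun S hS f => by
    obtain ⟨c, hc⟩ := hl S hS f
    exact ⟨MulOpposite.op c, hc⟩
  have hr' : IsMininjective Rᵐᵒᵖ R R := hr
  have hle : Module.length R R ≤ Module.length Rᵐᵒᵖ R :=
    (Module.length_le_of_injective (LinearMap.toSpanSingleton R (R →ₗ[Rᵐᵒᵖ] R) LinearMap.id)
      fun a b hab => by simpa using LinearMap.congr_fun hab 1).trans (hr'.length_linearMap_le hfl)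
  have hflR : IsFiniteLength R R :=
    Module.length_ne_top_iff.1 (ne_top_of_le_ne_top (Module.length_ne_top_iff.2 hfl) hle)
  refine ⟨(isFiniteLength_iff_isNoetherian_isArtinian.1 hflR).1,
    Module.Baer.injective fun I g => ?_⟩
  obtain ⟨f, rfl⟩ := hl'.lcomp_subtype_surjective hflR
    (hle.trans (LinearMap.ringLmapEquivSelf R Rᵐᵒᵖ R).symm.length_eq.le) I g
  exact ⟨f, fun _ _ => rfl⟩

end Ikeda

theorem stmt10_general (R : Type*) [Ring R] [IsNoetherianRing Rᵐᵒᵖ]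
    (hCS : IsLeftPrincipallyCS R) (hP : IsLeftPInjective R) : IsQuasiFrobenius R := by
  have : IsNoetherian Rᵐᵒᵖ R :=
    isNoetherian_of_linearEquiv (MulOpposite.opLinearEquiv Rᵐᵒᵖ : R ≃ₗ[Rᵐᵒᵖ] Rᵐᵒᵖ).symm
  have hD : HasUniformDecomposition R := hP.hasUniformDecomposition hCS
  have hK : IsLeftKasch R := hP.isLeftKasch isNilpotent_lSingularIdeal hD
  exact isQuasiFrobenius_of_isMininjective (hP.isFiniteLength_mulOpposite hD)
    hP.isLeftMininjective (hK.isRightMininjective hP hD)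

/-- Right noetherian, left CS, left P-injective imply QF. -/
theorem stmt10 (R : Type*) [Ring R] [IsNoetherianRing Rᵐᵒᵖ] (hCS : IsLeftCS R)
    (hP : IsLeftPInjective R) : IsQuasiFrobenius R :=
  stmt10_general R (fun a => hCS (Ideal.span {a})) hP
end

section
/- If R is a left and right mininjective ring with ACC on right annihilators in which the right socle S_r is essential as a right ideal, then R is quasi-Frobenius. -/
/-!
For a bimodule `P` whose homomorphisms out of simple submodules are scalars, dualizing does not
increase length: `length Hom(M, P) ≤ length M`. If moreover `length Hom(M, P)` attains its bound
`length M < ∞`, then counting lengths shows that homomorphisms into `P` extend from every submodule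
of `M`. Applied to `P = M = R` on both sides, this makes a mininjective ring of finite left length
self-injective, so it remains to bound the left length of `R`.

Let `J` be the left annihilator of the right socle. Essentiality of the socle puts `J` inside the
right singular ideal, which is nilpotent by the chain condition. The chain condition also writes `J`
as the left annihilator of finitely many elements of the socle, each generating a semisimple left
ideal by mininjectivity, so `R ⧸ J` is a semisimple ring. Dualizing the right module `R ⧸ J` bounds
the left length of the left annihilator of `J`, then of those of all powers of `J`, and one of these
is `R`.
-/

section FiniteLength

variable {A M N P : Type*} [Ring A] [AddCommGroup M] [AddCommGroup N] [AddCommGroup P]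
  [Module A M] [Module A N] [Module A P]

theorem isFiniteLength_of_exact {f : N →ₗ[A] M} {g : M →ₗ[A] P} (hN : IsFiniteLength A N)
    (hP : IsFiniteLength A P) (h : Function.Exact f g) : IsFiniteLength A M := by
  rw [isFiniteLength_iff_isNoetherian_isArtinian] at hN hP ⊢
  obtain ⟨_, _⟩ := hN
  obtain ⟨_, _⟩ := hP
  have hfg : LinearMap.range f = LinearMap.ker g := (LinearMap.exact_iff.1 h).symm
  exact ⟨isNoetherian_of_range_eq_ker f g hfg, isArtinian_of_range_eq_ker f g hfg⟩

theorem isFiniteLength_pi {ι : Type*} [Finite ι] {M : ι → Type*} [∀ i, AddCommGroup (M i)]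
    [∀ i, Module A (M i)] (h : ∀ i, IsFiniteLength A (M i)) : IsFiniteLength A (∀ i, M i) := by
  simp only [isFiniteLength_iff_isNoetherian_isArtinian] at h ⊢
  have := fun i => (h i).1
  have := fun i => (h i).2
  exact ⟨inferInstance, inferInstance⟩

theorem length_eq_length_add_length_quotient (N : Submodule A M) :
    Module.length A M = Module.length A N + Module.length A (M ⧸ N) :=
  Module.length_eq_add_of_exact N.subtype N.mkQ N.subtype_injective N.mkQ_surjective
    (LinearMap.exact_subtype_mkQ N)

theorem submodule_eq_top_of_length_le {N : Submodule A M} (hM : IsFiniteLength A M)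
    (h : Module.length A M ≤ Module.length A N) : N = ⊤ := by
  obtain ⟨_, _⟩ := isFiniteLength_iff_isNoetherian_isArtinian.1 hM
  by_contra hN
  exact h.not_gt (Submodule.length_lt hN)

end FiniteLength

section Dual

variable {A B P M : Type*} [Ring A] [Ring B] [AddCommGroup P] [Module A P] [Module B P]
  [SMulCommClass A B P] [AddCommGroup M] [Module A M]

theorem exact_lcomp_mkQ_lcomp_subtype_s16 (N : Submodule A M) :
    Function.Exact (N.mkQ.lcomp B P) (N.subtype.lcomp B P) := by
  refine fun f => ⟨fun hf => ?_, ?_⟩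
  · have hN : N ≤ LinearMap.ker f := fun x hx => LinearMap.congr_fun hf ⟨x, hx⟩
    exact ⟨N.liftQ f hN, N.liftQ_mkQ f hN⟩
  · rintro ⟨g, rfl⟩
    ext x
    simp [(Submodule.Quotient.mk_eq_zero N).2 x.2]

theorem length_hom_eq_length_hom_quotient_add (N : Submodule A M) :
    Module.length B (M →ₗ[A] P) = Module.length B ((M ⧸ N) →ₗ[A] P) +
      Module.length B (LinearMap.range (N.subtype.lcomp B P)) := by
  refine Module.length_eq_add_of_exact (N.mkQ.lcomp B P) (N.subtype.lcomp B P).rangeRestrict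
    (LinearMap.lcomp_injective_of_surjective _ N.mkQ_surjective)
    (N.subtype.lcomp B P).surjective_rangeRestrict ?_
  rw [LinearMap.exact_iff, LinearMap.ker_rangeRestrict, ← LinearMap.exact_iff]
  exact exact_lcomp_mkQ_lcomp_subtype_s16 N

variable (A B P) in
/-- An `A`-`B`-bimodule `P` (encoded as two commuting left actions) is mininjective over `A` if
every `A`-linear map from a simple `A`-submodule to `P` is multiplication by an element of `B`.
Left and right mininjective rings are the cases `(A, B, P) = (R, Rᵐᵒᵖ, R)` and `(Rᵐᵒᵖ, R, R)`. -/
def IsMininjectiveBimodule : Prop :=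
  ∀ N : Submodule A P, IsSimpleModule A N → ∀ f : N →ₗ[A] P, ∃ b : B, f = b • N.subtype

namespace IsMininjectiveBimodule

theorem exists_eq_smul (h : IsMininjectiveBimodule A B P) [IsSimpleModule A M] {f : M →ₗ[A] P}
    (hf : f ≠ 0) (g : M →ₗ[A] P) : ∃ b : B, g = b • f := by
  let e : M ≃ₗ[A] LinearMap.range f := .ofInjective f (LinearMap.injective_of_ne_zero hf)
  obtain ⟨b, hb⟩ := h _ (.congr e.symm) (g ∘ₗ e.symm.toLinearMap)
  refine ⟨b, LinearMap.ext fun m => ?_⟩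
  simpa [e] using LinearMap.congr_fun hb (e m)

theorem length_hom_le_one (h : IsMininjectiveBimodule A B P) [IsSimpleModule A M] :
    Module.length B (M →ₗ[A] P) ≤ 1 := by
  rcases subsingleton_or_nontrivial (M →ₗ[A] P) with _ | _
  · simp
  · have : IsSimpleModule B (M →ₗ[A] P) := isSimpleModule_iff_toSpanSingleton_surjective.2
      ⟨‹_›, fun f hf g => (h.exists_eq_smul hf g).imp fun _ => Eq.symm⟩
    exact Module.length_eq_one B _ |>.le

theorem length_hom_le (h : IsMininjectiveBimodule A B P) :
    Module.length B (M →ₗ[A] P) ≤ Module.length A M := by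
  by_cases hM : IsFiniteLength A M
  · induction hM with
    | of_subsingleton => simp
    | @of_simple_quotient M _ _ N _ _ ih =>
      calc Module.length B (M →ₗ[A] P)
        _ = Module.length B ((M ⧸ N) →ₗ[A] P) +
            Module.length B (LinearMap.range (N.subtype.lcomp B P)) :=
          length_hom_eq_length_hom_quotient_add N
        _ ≤ 1 + Module.length A N := add_le_add h.length_hom_le_one <|
          (Module.length_le_of_injective _ (Submodule.subtype_injective _)).trans ih
        _ = Module.length A M := by
          rw [length_eq_length_add_length_quotient N, Module.length_eq_one A (M ⧸ N), add_comm]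
  · simp [not_ne_iff.1 (mt Module.length_ne_top_iff.1 hM)]

theorem lcomp_subtype_surjective (h : IsMininjectiveBimodule A B P) (hM : IsFiniteLength A M)
    (hle : Module.length A M ≤ Module.length B (M →ₗ[A] P)) (N : Submodule A M) :
    Function.Surjective (N.subtype.lcomp B P) := by
  let T := LinearMap.range (N.subtype.lcomp B P)
  have hN : IsFiniteLength A N := hM.of_injective N.subtype_injective
  have hquot : Module.length A (M ⧸ N) ≠ ⊤ :=
    Module.length_ne_top_iff.2 (hM.of_surjective N.mkQ_surjective)
  have hHom : IsFiniteLength B (N →ₗ[A] P) :=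
    Module.length_ne_top_iff.1 (ne_top_of_le_ne_top (Module.length_ne_top_iff.2 hN) h.length_hom_le)
  have hT : Module.length A N ≤ Module.length B T := by
    refine (ENat.add_le_add_iff_left hquot).1 ?_
    calc Module.length A (M ⧸ N) + Module.length A N
      _ = Module.length A M := by rw [length_eq_length_add_length_quotient N, add_comm]
      _ ≤ Module.length B (M →ₗ[A] P) := hle
      _ = Module.length B ((M ⧸ N) →ₗ[A] P) + Module.length B T :=
        length_hom_eq_length_hom_quotient_add N
      _ ≤ Module.length A (M ⧸ N) + Module.length B T := by gcongr; exact h.length_hom_le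
  exact LinearMap.range_eq_top.1 (submodule_eq_top_of_length_le hHom (h.length_hom_le.trans hT))

end IsMininjectiveBimodule

end Dual

section Mininjective

variable {R : Type*} [Ring R]

theorem IsLeftMininjective.isMininjectiveBimodule (h : IsLeftMininjective R) :
    IsMininjectiveBimodule R Rᵐᵒᵖ R := fun I hI f => by
  obtain ⟨c, hc⟩ := h I hI f
  exact ⟨MulOpposite.op c, LinearMap.ext hc⟩

theorem IsRightMininjective.isMininjectiveBimodule (h : IsRightMininjective R) :
    IsMininjectiveBimodule Rᵐᵒᵖ R R := fun I hI f => by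
  obtain ⟨c, hc⟩ := h I hI f
  exact ⟨c, LinearMap.ext hc⟩

theorem IsRightMininjective.length_self_le (h : IsRightMininjective R) :
    Module.length R R ≤ Module.length Rᵐᵒᵖ R := by
  refine le_trans (Module.length_le_of_injective
    (LinearMap.toSpanSingleton R (R →ₗ[Rᵐᵒᵖ] R) .id) fun a b hab => ?_)
    h.isMininjectiveBimodule.length_hom_le
  simpa using LinearMap.congr_fun hab 1

theorem isQuasiFrobenius_of_isFiniteLength (hl : IsLeftMininjective R)
    (hr : IsRightMininjective R) (hR : IsFiniteLength R R) : IsQuasiFrobenius R := by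
  refine ⟨(isFiniteLength_iff_isNoetherian_isArtinian.1 hR).1, Module.Baer.injective fun I g => ?_⟩
  have hle : Module.length R R ≤ Module.length Rᵐᵒᵖ (R →ₗ[R] R) :=
    hr.length_self_le.trans_eq (LinearMap.ringLmapEquivSelf R Rᵐᵒᵖ R).length_eq.symm
  obtain ⟨f, rfl⟩ := hl.isMininjectiveBimodule.lcomp_subtype_surjective hR hle I g
  exact ⟨f, fun _ _ => rfl⟩

theorem IsRightMininjective.isFiniteLength_lAnnI (h : IsRightMininjective R) {I : RIdeal R}
    (hI : IsFiniteLength Rᵐᵒᵖ (R ⧸ I)) : IsFiniteLength R (lAnnI R (I : Set R)) := by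
  let ev : ((R ⧸ I) →ₗ[Rᵐᵒᵖ] R) →ₗ[R] R := LinearMap.applyₗ' R (I.mkQ 1)
  have hev : lAnnI R (I : Set R) ≤ LinearMap.range ev := fun c hc =>
    ⟨I.liftQ (c • LinearMap.id) fun x hx => LinearMap.mem_ker.2 (hc x hx), by simp [ev]⟩
  have hHom : IsFiniteLength R ((R ⧸ I) →ₗ[Rᵐᵒᵖ] R) := Module.length_ne_top_iff.1 <|
    ne_top_of_le_ne_top (Module.length_ne_top_iff.2 hI) h.isMininjectiveBimodule.length_hom_le
  exact (hHom.of_surjective ev.surjective_rangeRestrict).of_injective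
    (Submodule.inclusion_injective hev)

end Mininjective

section Annihilator

open scoped Pointwise

variable {R : Type*} [Ring R]

theorem lAnn_antitone : Antitone (lAnn R) := fun _ _ h _ ha x hx => ha x (h hx)

theorem rAnn_antitone : Antitone (rAnn R) := fun _ _ h _ ha x hx => ha x (h hx)

theorem subset_rAnn_lAnn (X : Set R) : X ⊆ rAnn R (lAnn R X) := fun x hx _ ha => ha x hx

theorem rAnn_singleton_subset_rAnn_mul_singleton (b a : R) : rAnn R {a} ⊆ rAnn R {b * a} := by
  rintro r hr _ rfl
  rw [mul_assoc, hr a rfl, mul_zero]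

theorem lAnnI_isTwoSided {X : Set R} (hX : ∀ b, ∀ x ∈ X, b * x ∈ X) : (lAnnI R X).IsTwoSided where
  mul_mem_of_left b ha x hx := by rw [mul_assoc, ha _ (hX b x hx)]

theorem lAnn_subset_rSingular {I : RIdeal R} (hI : IsEssentialRIdeal R I) :
    lAnn R (I : Set R) ⊆ rSingular R := by
  intro a ha K hK
  have hIa : I ≤ rAnnI R {a} := by
    rintro x hx _ rfl
    exact ha x hx
  exact hI K (eq_bot_mono (inf_le_inf_left K hIa) hK)

theorem not_rAnn_mul_subset_of_mem_rSingular {a b : R} (hb : b ∈ rSingular R) (ha : a ≠ 0) :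
    ¬ rAnn R {b * a} ⊆ rAnn R {a} := by
  intro hsub
  have hbot : Submodule.span Rᵐᵒᵖ {a} ⊓ rAnnI R {b} = ⊥ := by
    rw [eq_bot_iff]
    rintro y ⟨hy, hby⟩
    obtain ⟨r, rfl⟩ := Submodule.mem_span_singleton.1 hy
    refine hsub (?_ : r.unop ∈ rAnn R {b * a}) a rfl
    rintro _ rfl
    exact (mul_assoc b a r.unop).trans (hby b rfl)
  exact ha (by simpa using hb _ hbot)

namespace ACCOnRightAnnihilators

theorem exists_maximalFor (hacc : ACCOnRightAnnihilators R) {ι : Type*} {p : ι → Prop}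
    (hp : ∃ i, p i) (X : ι → Set R) : ∃ i, MaximalFor p (fun j => rAnn R (X j)) i := by
  have : WellFoundedGT (Set.range (rAnn R)) := by
    rw [wellFoundedGT_iff_monotone_chain_condition]
    intro a
    obtain ⟨n, hn⟩ := hacc (fun n => a n) (fun n => (a n).2.imp fun _ => Eq.symm)
      (fun n => a.monotone n.le_succ)
    exact ⟨n, fun m hm => Subtype.ext (hn m hm).symm⟩
  exact exists_maximalFor_of_wellFoundedGT p
    (fun j => (⟨rAnn R (X j), X j, rfl⟩ : Set.range (rAnn R))) hp

theorem exists_finset_lAnn_eq (hacc : ACCOnRightAnnihilators R) (X : Set R) :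
    ∃ F : Finset R, (F : Set R) ⊆ X ∧ lAnn R F = lAnn R X := by
  classical
  obtain ⟨F, hFX, hF⟩ := hacc.exists_maximalFor (p := fun F : Finset R => (F : Set R) ⊆ X)
    ⟨∅, by simp⟩ (fun F => lAnn R F)
  have hX : X ⊆ rAnn R (lAnn R F) := fun x hx => by
    refine hF (j := insert x F) ?_ (rAnn_antitone (lAnn_antitone ?_)) (subset_rAnn_lAnn _ ?_)
    · simpa using Set.insert_subset hx hFX
    · simp
    · simp
  exact ⟨F, hFX, Set.Subset.antisymm (fun a ha x hx => hX hx a ha) (lAnn_antitone hFX)⟩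

theorem isSemisimpleModule_quotient_lAnnI (hacc : ACCOnRightAnnihilators R) {X : Set R}
    (hX : ∀ x ∈ X, IsSemisimpleModule R (Ideal.span {x})) :
    IsSemisimpleModule R (R ⧸ lAnnI R X) := by
  obtain ⟨F, hFX, hF⟩ := hacc.exists_finset_lAnn_eq X
  let φ : R →ₗ[R] ∀ x : F, Ideal.span {(x : R)} := LinearMap.pi fun x =>
    LinearMap.toSpanSingleton R _ ⟨x, Ideal.mem_span_singleton_self _⟩
  have hker : lAnnI R X = LinearMap.ker φ := by
    ext c
    change c ∈ lAnn R X ↔ _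
    rw [← hF]
    simp [lAnn, φ, funext_iff, Subtype.ext_iff]
  have : ∀ x : F, IsSemisimpleModule R (Ideal.span {(x : R)}) := fun x => hX x (hFX x.2)
  exact .of_injective ((lAnnI R X).liftQ φ hker.le)
    (LinearMap.ker_eq_bot.1 (Submodule.ker_liftQ_eq_bot' _ _ hker))

theorem isFiniteLength_lAnnI_mul (hacc : ACCOnRightAnnihilators R) {X Y : Set R}
    (hX : IsFiniteLength R (lAnnI R X)) (hY : IsFiniteLength R (lAnnI R Y)) :
    IsFiniteLength R (lAnnI R (X * Y)) := by
  obtain ⟨F, hFX, hF⟩ := hacc.exists_finset_lAnn_eq X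
  have hXY : lAnnI R X ≤ lAnnI R (X * Y) := by
    rintro c hc _ ⟨x, hx, y, -, rfl⟩
    rw [← mul_assoc, hc x hx, zero_mul]
  let ψ : lAnnI R (X * Y) →ₗ[R] (F → lAnnI R Y) := LinearMap.pi fun x =>
    ((LinearMap.toSpanSingleton R R x).domRestrict _).codRestrict _ fun c y hy => by
      simpa [mul_assoc] using c.2 _ (Set.mul_mem_mul (hFX x.2) hy)
  refine isFiniteLength_of_exact (f := Submodule.inclusion hXY) (g := ψ) hX
    (isFiniteLength_pi fun _ => hY) fun c => ?_
  have hker : ψ c = 0 ↔ (c : R) ∈ lAnn R F := by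
    simp only [funext_iff, Subtype.ext_iff, lAnn]
    exact ⟨fun h x hx => h ⟨x, hx⟩, fun h x => h x x.2⟩
  rw [hker, hF]
  exact ⟨fun hc => ⟨⟨c, hc⟩, rfl⟩, by rintro ⟨d, rfl⟩; exact d.2⟩

theorem isFiniteLength_lAnnI_pow (hacc : ACCOnRightAnnihilators R) {X : Set R}
    (hX : IsFiniteLength R (lAnnI R X)) (n : ℕ) : IsFiniteLength R (lAnnI R (X ^ n)) := by
  induction n with
  | zero =>
    have : lAnnI R (X ^ 0) = ⊥ := eq_bot_iff.2 fun c hc => by simpa using hc 1 (by simp)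
    rw [this]
    exact .of_subsingleton
  | succ n ih =>
    rw [pow_succ]
    exact hacc.isFiniteLength_lAnnI_mul ih hX

/-- The argument of Mewborn and Winton: among the elements not killed by the stable power of the
singular ideal, one with maximal right annihilator is killed by one more factor. -/
theorem exists_pow_rSingular_subset (hacc : ACCOnRightAnnihilators R) :
    ∃ n, rSingular R ^ n ⊆ {0} := by
  obtain ⟨n, -, hn⟩ := hacc.exists_maximalFor (p := fun _ : ℕ => True) ⟨0, trivial⟩
    (rSingular R ^ ·)
  have hmono : rAnn R (rSingular R ^ n) ⊆ rAnn R (rSingular R ^ (n + 1)) := by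
    rw [pow_succ']
    rintro y hy _ ⟨b, -, x, hx, rfl⟩
    rw [mul_assoc, hy x hx, mul_zero]
  refine ⟨n, fun z hz => by_contra fun hz0 => ?_⟩
  have hone : (1 : R) ∉ rAnn R (rSingular R ^ n) := fun h => hz0 (by simpa using h z hz)
  obtain ⟨a, ha, hmax⟩ := hacc.exists_maximalFor
    (p := fun a => a ∉ rAnn R (rSingular R ^ n)) ⟨1, hone⟩ (fun a => {a})
  have ha0 : a ≠ 0 := by
    rintro rfl
    exact ha (zero_mem (rAnnI R _))
  have hkill : ∀ b ∈ rSingular R, b * a ∈ rAnn R (rSingular R ^ n) := fun b hb =>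
    by_contra fun hba => not_rAnn_mul_subset_of_mem_rSingular hb ha0 <|
      hmax hba (rAnn_singleton_subset_rAnn_mul_singleton b a)
  have hsucc : a ∈ rAnn R (rSingular R ^ (n + 1)) := by
    rw [pow_succ]
    rintro _ ⟨x, hx, b, hb, rfl⟩
    rw [mul_assoc, hkill b hb x hx]
  exact ha (hn trivial hmono hsucc)

theorem isFiniteLength_of_subset_rSingular (hacc : ACCOnRightAnnihilators R) {X : Set R}
    (hX : X ⊆ rSingular R) (hfin : IsFiniteLength R (lAnnI R X)) : IsFiniteLength R R := by
  obtain ⟨n, hn⟩ := hacc.exists_pow_rSingular_subset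
  have htop : lAnnI R (X ^ n) = ⊤ := eq_top_iff.2 fun c _ x hx => by
    rw [hn (Set.pow_subset_pow_left hX hx), mul_zero]
  have hpow : IsFiniteLength R (lAnnI R (X ^ n)) := hacc.isFiniteLength_lAnnI_pow hfin n
  rw [htop] at hpow
  exact hpow.of_surjective Submodule.topEquiv.surjective

end ACCOnRightAnnihilators

end Annihilator

section Socle

theorem map_sSup_isSimpleModule_le {A M N : Type*} [Ring A] [AddCommGroup M] [AddCommGroup N]
    [Module A M] [Module A N] (f : M →ₗ[A] N) :
    (sSup {S : Submodule A M | IsSimpleModule A S}).map f ≤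
      sSup {S : Submodule A N | IsSimpleModule A S} := by
  rw [sSup_eq_iSup', Submodule.map_iSup]
  refine iSup_le fun ⟨S, (hS : IsSimpleModule A S)⟩ => ?_
  rw [← LinearMap.range_domRestrict]
  rcases (f.domRestrict S).injective_or_eq_zero with hinj | hzero
  · exact le_sSup (IsSimpleModule.congr (.symm (.ofInjective _ hinj)))
  · simp [hzero]

variable {R : Type*} [Ring R]

theorem mul_mem_rSocle (b : R) {x : R} (hx : x ∈ rSocle R) : b * x ∈ rSocle R :=
  map_sSup_isSimpleModule_le (b • LinearMap.id : R →ₗ[Rᵐᵒᵖ] R) ⟨x, hx, rfl⟩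

namespace IsRightMininjective

theorem isSimpleModule_span_singleton (h : IsRightMininjective R) {m : RIdeal R}
    [IsSimpleModule Rᵐᵒᵖ m] {x : R} (hx : x ∈ m) (hx0 : x ≠ 0) :
    IsSimpleModule R (Ideal.span {x}) := by
  have hgen : ∀ c : R, c * x ≠ 0 → ∃ d : R, x = d * (c * x) := fun c hc => by
    have hc' : c • m.subtype ≠ 0 := fun h0 => hc (LinearMap.congr_fun h0 ⟨x, hx⟩)
    obtain ⟨d, hd⟩ := h.isMininjectiveBimodule.exists_eq_smul hc' m.subtype
    exact ⟨d, LinearMap.congr_fun hd ⟨x, hx⟩⟩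
  rw [isSimpleModule_iff_toSpanSingleton_surjective]
  refine ⟨Submodule.nontrivial_iff_ne_bot.2 (by simpa using hx0), ?_⟩
  rintro ⟨y, hy⟩ hy0 ⟨z, hz⟩
  obtain ⟨c, rfl⟩ := Ideal.mem_span_singleton'.1 hy
  obtain ⟨e, rfl⟩ := Ideal.mem_span_singleton'.1 hz
  obtain ⟨d, hd⟩ := hgen c fun h0 => hy0 (Subtype.ext h0)
  exact ⟨e * d, Subtype.ext (by simp [mul_assoc, ← hd])⟩

theorem isSemisimpleModule_span_singleton (h : IsRightMininjective R) {x : R}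
    (hx : x ∈ rSocle R) : IsSemisimpleModule R (Ideal.span {x}) := by
  have hzero : IsSemisimpleModule R (Ideal.span {(0 : R)}) := by
    rw [Ideal.span_singleton_zero]
    exact (isSemisimpleModule_iff _ _).2 Subsingleton.instComplementedLattice
  rw [rSocle, sSup_eq_iSup'] at hx
  induction hx using Submodule.iSup_induction' with
  | mem m x hx =>
    have : IsSimpleModule Rᵐᵒᵖ m.1 := m.2
    by_cases hx0 : x = 0
    · exact hx0 ▸ hzero
    · have := h.isSimpleModule_span_singleton hx hx0
      infer_instance
  | zero => exact hzero
  | add x y _ _ hx hy =>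
    have hxy : Ideal.span {x + y} ≤ Ideal.span {x} ⊔ Ideal.span {y} :=
      (Ideal.span_singleton_le_iff_mem _).2 <| Submodule.add_mem_sup
        (Ideal.mem_span_singleton_self x) (Ideal.mem_span_singleton_self y)
    have := IsSemisimpleModule.sup hx hy
    exact .of_injective (Submodule.inclusion hxy) (Submodule.inclusion_injective hxy)

end IsRightMininjective

end Socle

section Quotient

theorem isFiniteLength_iff_of_bijective {A B M N : Type*} [Ring A] [Ring B] [AddCommGroup M]
    [AddCommGroup N] [Module A M] [Module B N] {σ : A →+* B} [RingHomSurjective σ]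
    (f : M →ₛₗ[σ] N) (hf : Function.Bijective f) : IsFiniteLength A M ↔ IsFiniteLength B N := by
  rw [isFiniteLength_iff_isNoetherian_isArtinian, isFiniteLength_iff_isNoetherian_isArtinian,
    f.isNoetherian_iff_of_bijective hf, f.isArtinian_iff_of_bijective hf]

variable {R : Type*} [Ring R] (I : Ideal R) [I.IsTwoSided]

theorem isSemisimpleRing_quotient_iff :
    IsSemisimpleRing (R ⧸ I) ↔ IsSemisimpleModule R (R ⧸ I) := by
  let e : (R ⧸ I) →ₛₗ[Ideal.Quotient.mk I] (R ⧸ I) :=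
    { toFun := id
      map_add' := fun _ _ => rfl
      map_smul' := fun a x => by
        obtain ⟨x, rfl⟩ := Ideal.Quotient.mk_surjective x
        rfl }
  have : RingHomSurjective (Ideal.Quotient.mk I) := ⟨Ideal.Quotient.mk_surjective⟩
  exact (e.isSemisimpleModule_iff_of_bijective Function.bijective_id).symm

/-- A two-sided ideal, viewed as a right ideal. Two-sidedness is a property of left ideals in
Mathlib, whereas right ideals are submodules over the opposite ring. -/
def rightIdealOfIsTwoSided : RIdeal R where
  __ := I.toAddSubmonoid
  smul_mem' c _ hx := I.mul_mem_right c.unop hx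

theorem isFiniteLength_quotient_rightIdealOfIsTwoSided
    (h : IsFiniteLength (R ⧸ I)ᵐᵒᵖ (R ⧸ I)ᵐᵒᵖ) :
    IsFiniteLength Rᵐᵒᵖ (R ⧸ rightIdealOfIsTwoSided I) := by
  let σ : Rᵐᵒᵖ →+* (R ⧸ I)ᵐᵒᵖ := (Ideal.Quotient.mk I).op
  have hsurj : Function.Surjective fun x : R => MulOpposite.op (Ideal.Quotient.mk I x) :=
    MulOpposite.op_surjective.comp Ideal.Quotient.mk_surjective
  have : RingHomSurjective σ := ⟨hsurj.comp MulOpposite.unop_surjective⟩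
  let q : R →ₛₗ[σ] (R ⧸ I)ᵐᵒᵖ :=
    { toFun := fun x => MulOpposite.op (Ideal.Quotient.mk I x)
      map_add' := fun _ _ => rfl
      map_smul' := fun _ _ => rfl }
  have hker : rightIdealOfIsTwoSided I = LinearMap.ker q := by
    ext x
    exact Ideal.Quotient.eq_zero_iff_mem.symm.trans (MulOpposite.op_eq_zero_iff _).symm
  refine (isFiniteLength_iff_of_bijective ((rightIdealOfIsTwoSided I).liftQ q hker.le)
    ⟨LinearMap.ker_eq_bot.1 (Submodule.ker_liftQ_eq_bot' _ _ hker), fun y => ?_⟩).2 h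
  obtain ⟨x, rfl⟩ := hsurj y
  exact ⟨Submodule.Quotient.mk x, rfl⟩

end Quotient

/-- Left and right mininjective with ACC on right annihilators and essential right
socle implies QF. -/
theorem stmt16 (R : Type*) [Ring R] (hlmin : IsLeftMininjective R)
    (hrmin : IsRightMininjective R) (hacc : ACCOnRightAnnihilators R)
    (hess : IsEssentialRIdeal R (rSocle R)) : IsQuasiFrobenius R := by
  let J := lAnnI R (rSocle R : Set R)
  have : J.IsTwoSided := lAnnI_isTwoSided fun b _ => mul_mem_rSocle b
  have : IsSemisimpleRing (R ⧸ J) := (isSemisimpleRing_quotient_iff J).2 <|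
    hacc.isSemisimpleModule_quotient_lAnnI fun _ => hrmin.isSemisimpleModule_span_singleton
  have hquot : IsFiniteLength Rᵐᵒᵖ (R ⧸ rightIdealOfIsTwoSided J) :=
    isFiniteLength_quotient_rightIdealOfIsTwoSided J <|
      isFiniteLength_iff_isNoetherian_isArtinian.2 ⟨inferInstance, inferInstance⟩
  have hJ : IsFiniteLength R (lAnnI R (J : Set R)) := hrmin.isFiniteLength_lAnnI hquot
  have hR : IsFiniteLength R R :=
    hacc.isFiniteLength_of_subset_rSingular (lAnn_subset_rSingular hess) hJ
  exact isQuasiFrobenius_of_isFiniteLength hlmin hrmin hR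
end
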